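/- arXiv:1711.09541 — 3 statements merged into one kernel-verified Lean document; each statement's English description precedes it below -/
import Mathlib

section
/- Let S and ΔS be real symmetric N×N matrices and let 1 ≤ k ≤ N. Let λ_1, …, λ_N denote the eigenvalues of S ordered so that |λ_1| ≥ |λ_2| ≥ … ≥ |λ_N|, and define the SVD minimum loss L(S,k) = Σ_{l=k+1}^N λ_l². Let μ_1 ≥ μ_2 ≥ … ≥ μ_k be the k largest eigenvalues of the symmetric matrix ∇ = S·ΔS + ΔS·S + ΔS·ΔS. Then L(S + ΔS, k) ≥ L(S,k) + tr((S+ΔS)·(S+ΔS)) − tr(S·S) − Σ_{l=1}^k μ_l. -/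
open Matrix

/-!
Since `(S + ΔS)² = S² + ∇` and `L(S, k) = tr S² - Λ^k(S²)`, the bound is the subadditivity
`Λ^k(A + B) ≤ Λ^k(A) + Λ^k(B)` of the sum of the `k` largest eigenvalues. That follows from Ky Fan's
principle: the diagonal entries of a Hermitian matrix along `k` orthonormal vectors sum to
`∑ i, p i * a i`, where `a` lists the eigenvalues and the weights `p i ∈ [0, 1]` have total mass
`k`, and such a sum is largest when all the mass sits on the `k` largest eigenvalues.
-/

section TopSet

variable {ι R : Type*}

/-- `s` is a set of positions of the `#s` largest values of `f`, ties being broken arbitrarily. It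
makes `∑ i ∈ s, f i` the sum of the `#s` largest values without ordering the index type. -/
def IsTopSet [LE R] (f : ι → R) (s : Finset ι) : Prop :=
  ∀ i ∈ s, ∀ j ∉ s, f j ≤ f i

theorem isTopSet_of_antitone [LinearOrder ι] [Preorder R] {f : ι → R} (hf : Antitone f)
    {s : Finset ι} (hs : IsLowerSet (s : Set ι)) : IsTopSet f s := fun _ hi _ hj =>
  hf (le_of_not_ge fun hji => hj (hs hji hi))

theorem isLowerSet_filter_val_lt (N k : ℕ) :
    IsLowerSet ((Finset.univ.filter fun l : Fin N => (l : ℕ) < k : Finset (Fin N)) :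
      Set (Fin N)) := fun _ _ hji hi => by
  simpa using (Fin.le_def.1 hji).trans_lt (by simpa using hi)

namespace IsTopSet

theorem sq_of_abs [Ring R] [LinearOrder R] [IsStrictOrderedRing R] {f : ι → R} {s : Finset ι}
    (hs : IsTopSet (fun i => |f i|) s) : IsTopSet (fun i => f i ^ 2) s := fun i hi j hj =>
  sq_le_sq.2 (hs i hi j hj)

theorem exists_threshold [Finite ι] [LinearOrder R] [Nonempty R] {f : ι → R} {s : Finset ι}
    (hs : IsTopSet f s) : ∃ c, (∀ i ∈ s, c ≤ f i) ∧ ∀ j ∉ s, f j ≤ c := by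
  obtain rfl | hne := s.eq_empty_or_nonempty
  · obtain ⟨c, hc⟩ := (Set.finite_range f).bddAbove
    exact ⟨c, by simp, fun j _ => hc (Set.mem_range_self j)⟩
  · obtain ⟨i, hi, hmin⟩ := s.exists_min_image f hne
    exact ⟨f i, hmin, hs i hi⟩

theorem sum_mul_le_sum [Fintype ι] [Ring R] [LinearOrder R] [IsOrderedRing R]
    {f p : ι → R} {s : Finset ι} (hs : IsTopSet f s) (hp_nonneg : ∀ i, 0 ≤ p i)
    (hp_le_one : ∀ i, p i ≤ 1) (hp_sum : ∑ i, p i = s.card) :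
    ∑ i, p i * f i ≤ ∑ i ∈ s, f i := by
  classical
  obtain ⟨c, hc_le, hle_c⟩ := hs.exists_threshold
  have shifted : ∑ i, p i * (f i - c) ≤ ∑ i ∈ s, (f i - c) := by
    rw [← Fintype.sum_ite_mem s]
    refine Finset.sum_le_sum fun i _ => ?_
    split_ifs with hi
    · exact mul_le_of_le_one_left (sub_nonneg.2 (hc_le i hi)) (hp_le_one i)
    · exact mul_nonpos_of_nonneg_of_nonpos (hp_nonneg i) (sub_nonpos.2 (hle_c i hi))
  simpa only [mul_sub, Finset.sum_sub_distrib, ← Finset.sum_mul, hp_sum, Finset.sum_const,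
    nsmul_eq_mul, sub_le_sub_iff_right] using shifted

end IsTopSet

end TopSet

section Matrix

variable {𝕜 ι κ : Type*} [RCLike 𝕜] [Fintype ι]

theorem mul_diagonal_mul_conjTranspose_apply_self [DecidableEq ι] (V : Matrix κ ι 𝕜) (a : ι → ℝ)
    (k : κ) :
    (V * diagonal (fun i => (a i : 𝕜)) * Vᴴ) k k = ((∑ i, ‖V k i‖ ^ 2 * a i : ℝ) : 𝕜) := by
  rw [Matrix.mul_apply]
  simp only [mul_diagonal, conjTranspose_apply, RCLike.star_def,
    mul_right_comm _ _ (starRingEnd 𝕜 _), RCLike.mul_conj, RCLike.ofReal_sum, RCLike.ofReal_mul,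
    RCLike.ofReal_pow]

theorem mul_conjTranspose_self_apply_self (V : Matrix κ ι 𝕜) (k : κ) :
    (V * Vᴴ) k k = ((∑ i, ‖V k i‖ ^ 2 : ℝ) : 𝕜) := by
  classical simpa using mul_diagonal_mul_conjTranspose_apply_self V 1 k

theorem sum_norm_sq_row_eq_one [DecidableEq κ] {V : Matrix κ ι 𝕜} (hV : V * Vᴴ = 1) (k : κ) :
    ∑ i, ‖V k i‖ ^ 2 = 1 := by
  have h := mul_conjTranspose_self_apply_self V k
  rw [hV, one_apply_eq] at h
  exact_mod_cast h.symm

/- `1 - Vᴴ * V` is an orthogonal projection, so each of its diagonal entries is the squared norm of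
a row. -/
theorem sum_norm_sq_col_le_one [Fintype κ] [DecidableEq κ] {V : Matrix κ ι 𝕜} (hV : V * Vᴴ = 1)
    (i : ι) : ∑ k, ‖V k i‖ ^ 2 ≤ 1 := by
  classical
  set Q := 1 - Vᴴ * V with hQ
  have hidem : Vᴴ * V * (Vᴴ * V) = Vᴴ * V := by
    rw [Matrix.mul_assoc, ← Matrix.mul_assoc V, hV, Matrix.one_mul]
  have hproj : Q * Qᴴ = Q := by simp [hQ, Matrix.mul_sub, Matrix.sub_mul, hidem]
  have hcol : (Vᴴ * V) i i = ((∑ k, ‖V k i‖ ^ 2 : ℝ) : 𝕜) := by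
    simpa using mul_conjTranspose_self_apply_self Vᴴ i
  have hrow : 1 - ∑ k, ‖V k i‖ ^ 2 = ∑ j, ‖Q i j‖ ^ 2 := by
    have hdiag := mul_conjTranspose_self_apply_self Q i
    rw [hproj, hQ, Matrix.sub_apply, one_apply_eq, hcol, ← hQ] at hdiag
    exact_mod_cast hdiag
  rw [← sub_nonneg, hrow]
  positivity

theorem IsTopSet.sum_re_mul_diagonal_mul_conjTranspose_le [DecidableEq ι] [Finite κ] [DecidableEq κ]
    {a : ι → ℝ} {s : Finset ι} (hs : IsTopSet a s) {V : Matrix κ ι 𝕜} (hV : V * Vᴴ = 1)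
    {t : Finset κ} (hts : t.card = s.card) :
    ∑ k ∈ t, RCLike.re ((V * diagonal (fun i => (a i : 𝕜)) * Vᴴ) k k) ≤ ∑ i ∈ s, a i := by
  cases nonempty_fintype κ
  have hweight_le_one (i : ι) : ∑ k ∈ t, ‖V k i‖ ^ 2 ≤ 1 :=
    (Finset.sum_le_univ_sum_of_nonneg fun _ => sq_nonneg _).trans (sum_norm_sq_col_le_one hV i)
  have hweight_sum : ∑ i, ∑ k ∈ t, ‖V k i‖ ^ 2 = s.card := by
    rw [Finset.sum_comm]
    simp [sum_norm_sq_row_eq_one hV, hts]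
  calc ∑ k ∈ t, RCLike.re ((V * diagonal (fun i => (a i : 𝕜)) * Vᴴ) k k)
      = ∑ i, (∑ k ∈ t, ‖V k i‖ ^ 2) * a i := by
        simp only [mul_diagonal_mul_conjTranspose_apply_self, RCLike.ofReal_re, Finset.sum_mul]
        exact Finset.sum_comm
    _ ≤ ∑ i ∈ s, a i :=
        hs.sum_mul_le_sum (fun _ => Finset.sum_nonneg fun _ _ => sq_nonneg _) hweight_le_one
          hweight_sum

variable [DecidableEq ι]

/-- A spectral decomposition of the Hermitian matrix `A`: the columns of the unitary matrix `U` are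
eigenvectors, with eigenvalues listed by `a` in any order. -/
structure IsSpectralDecomposition (A U : Matrix ι ι 𝕜) (a : ι → ℝ) : Prop where
  conjTranspose_mul_self : Uᴴ * U = 1
  eq_mul_diagonal_mul : A = U * diagonal (fun i => (a i : 𝕜)) * Uᴴ

namespace IsSpectralDecomposition

variable {A B U W : Matrix ι ι 𝕜} {a b : ι → ℝ}

theorem mul_conjTranspose_self (hA : IsSpectralDecomposition A U a) : U * Uᴴ = 1 :=
  mul_eq_one_comm.1 hA.conjTranspose_mul_self

theorem mul (hA : IsSpectralDecomposition A U a) (hB : IsSpectralDecomposition B U b) :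
    IsSpectralDecomposition (A * B) U (fun i => a i * b i) where
  conjTranspose_mul_self := hA.conjTranspose_mul_self
  eq_mul_diagonal_mul := by
    calc A * B
        = U * diagonal (fun i => (a i : 𝕜)) * (Uᴴ * U) * diagonal (fun i => (b i : 𝕜)) * Uᴴ := by
          simp only [hA.eq_mul_diagonal_mul, hB.eq_mul_diagonal_mul, Matrix.mul_assoc]
      _ = U * diagonal (fun i => ((a i * b i : ℝ) : 𝕜)) * Uᴴ := by
          simp only [hA.conjTranspose_mul_self, Matrix.mul_one, Matrix.mul_assoc U,
            diagonal_mul_diagonal, RCLike.ofReal_mul]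

theorem mul_self (hA : IsSpectralDecomposition A U a) :
    IsSpectralDecomposition (A * A) U (fun i => a i ^ 2) := by
  simpa only [sq] using hA.mul hA

theorem trace_eq (hA : IsSpectralDecomposition A U a) : A.trace = ((∑ i, a i : ℝ) : 𝕜) := by
  rw [hA.eq_mul_diagonal_mul, trace_mul_comm, ← Matrix.mul_assoc, hA.conjTranspose_mul_self,
    Matrix.one_mul, trace_diagonal, RCLike.ofReal_sum]

theorem sum_compl_eq (hA : IsSpectralDecomposition A U a) (s : Finset ι) :
    ∑ i ∈ sᶜ, a i = RCLike.re A.trace - ∑ i ∈ s, a i := by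
  rw [hA.trace_eq, RCLike.ofReal_re, ← Finset.sum_add_sum_compl s, add_sub_cancel_left]

theorem conjTranspose_mul_mul_self (hA : IsSpectralDecomposition A U a) :
    Uᴴ * A * U = diagonal (fun i => (a i : 𝕜)) := by
  calc Uᴴ * A * U = Uᴴ * U * diagonal (fun i => (a i : 𝕜)) * (Uᴴ * U) := by
        simp only [hA.eq_mul_diagonal_mul, Matrix.mul_assoc]
    _ = diagonal (fun i => (a i : 𝕜)) := by
        rw [hA.conjTranspose_mul_self, Matrix.one_mul, Matrix.mul_one]

theorem sum_re_conjTranspose_mul_mul_le [Finite κ] [DecidableEq κ]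
    (hA : IsSpectralDecomposition A U a) {s : Finset ι} (hs : IsTopSet a s)
    {X : Matrix ι κ 𝕜} (hX : Xᴴ * X = 1) {t : Finset κ} (hts : t.card = s.card) :
    ∑ k ∈ t, RCLike.re ((Xᴴ * A * X) k k) ≤ ∑ i ∈ s, a i := by
  have hXU : Xᴴ * U * (Xᴴ * U)ᴴ = 1 := by
    rw [conjTranspose_mul, conjTranspose_conjTranspose, Matrix.mul_assoc, ← Matrix.mul_assoc U,
      hA.mul_conjTranspose_self, Matrix.one_mul, hX]
  simpa only [hA.eq_mul_diagonal_mul, conjTranspose_mul, conjTranspose_conjTranspose,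
    Matrix.mul_assoc] using hs.sum_re_mul_diagonal_mul_conjTranspose_le hXU hts

theorem sum_le_sum_add_sum {Z : Matrix ι ι 𝕜} {c : ι → ℝ} (hA : IsSpectralDecomposition A U a)
    (hB : IsSpectralDecomposition B W b) (hAB : IsSpectralDecomposition (A + B) Z c)
    {s t u : Finset ι} (hs : IsTopSet a s) (ht : IsTopSet b t) (hus : u.card = s.card)
    (hut : u.card = t.card) :
    ∑ i ∈ u, c i ≤ ∑ i ∈ s, a i + ∑ i ∈ t, b i := by
  have hc (i : ι) :
      c i = RCLike.re ((Zᴴ * A * Z) i i) + RCLike.re ((Zᴴ * B * Z) i i) := by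
    rw [← map_add, ← Matrix.add_apply, ← Matrix.add_mul, ← Matrix.mul_add,
      hAB.conjTranspose_mul_mul_self, diagonal_apply_eq, RCLike.ofReal_re]
  simp only [hc, Finset.sum_add_distrib]
  exact add_le_add (hA.sum_re_conjTranspose_mul_mul_le hs hAB.conjTranspose_mul_self hus)
    (hB.sum_re_conjTranspose_mul_mul_le ht hAB.conjTranspose_mul_self hut)

end IsSpectralDecomposition

theorem svd_min_loss_lower_bound_general {S ΔS U₁ U₂ U₃ : Matrix ι ι 𝕜} {lam lam' mu : ι → ℝ}
    {s : Finset ι} (hS : IsSpectralDecomposition S U₁ lam)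
    (hlam : IsTopSet (fun i => |lam i|) s) (hSΔS : IsSpectralDecomposition (S + ΔS) U₂ lam')
    (hgrad : IsSpectralDecomposition (S * ΔS + ΔS * S + ΔS * ΔS) U₃ mu) (hmu : IsTopSet mu s) :
    ∑ i ∈ sᶜ, lam' i ^ 2 ≥
      ∑ i ∈ sᶜ, lam i ^ 2 +
        (RCLike.re ((S + ΔS) * (S + ΔS)).trace - RCLike.re (S * S).trace) - ∑ i ∈ s, mu i := by
  have hexpand : (S + ΔS) * (S + ΔS) = S * S + (S * ΔS + ΔS * S + ΔS * ΔS) := by noncomm_ring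
  have hfan : ∑ i ∈ s, lam' i ^ 2 ≤ ∑ i ∈ s, lam i ^ 2 + ∑ i ∈ s, mu i :=
    hS.mul_self.sum_le_sum_add_sum hgrad (hexpand ▸ hSΔS.mul_self) hlam.sq_of_abs hmu rfl rfl
  rw [hSΔS.mul_self.sum_compl_eq, hS.mul_self.sum_compl_eq]
  linarith

end Matrix

/-- lower bound of SVD minimum loss: for real symmetric `S`, `ΔS`
and `1 ≤ k ≤ N`, with `lam` the eigenvalues of `S` ordered by descending
absolute value, `lam'` the eigenvalues of `S + ΔS` ordered by descending
absolute value, and `mu` the eigenvalues of `∇ = S·ΔS + ΔS·S + ΔS·ΔS` in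
descending order (each given via an orthogonal spectral decomposition), we have
`L(S+ΔS,k) ≥ L(S,k) + tr((S+ΔS)·(S+ΔS)) − tr(S·S) − Σ_{l=1}^k mu l`,
where `L(·,k)` is the sum of the squares of all but the `k` largest-magnitude
eigenvalues. -/
theorem svd_min_loss_lower_bound
    {N k : ℕ} (hk1 : 1 ≤ k) (hkN : k ≤ N)
    (S ΔS : Matrix (Fin N) (Fin N) ℝ) (hS : S.IsSymm) (hΔS : ΔS.IsSymm)
    (lam : Fin N → ℝ) (U1 : Matrix (Fin N) (Fin N) ℝ)
    (hU1 : U1ᵀ * U1 = 1) (hSdecomp : S = U1 * Matrix.diagonal lam * U1ᵀ)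
    (hlam : Antitone fun l => |lam l|)
    (lam' : Fin N → ℝ) (U2 : Matrix (Fin N) (Fin N) ℝ)
    (hU2 : U2ᵀ * U2 = 1)
    (hSΔSdecomp : S + ΔS = U2 * Matrix.diagonal lam' * U2ᵀ)
    (hlam' : Antitone fun l => |lam' l|)
    (mu : Fin N → ℝ) (U3 : Matrix (Fin N) (Fin N) ℝ)
    (hU3 : U3ᵀ * U3 = 1)
    (hgrad : S * ΔS + ΔS * S + ΔS * ΔS = U3 * Matrix.diagonal mu * U3ᵀ)
    (hmu : Antitone mu) :
    ∑ l ∈ Finset.univ.filter (fun l : Fin N => k ≤ (l : ℕ)), lam' l ^ 2 ≥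
      (∑ l ∈ Finset.univ.filter (fun l : Fin N => k ≤ (l : ℕ)), lam l ^ 2) +
        (((S + ΔS) * (S + ΔS)).trace - (S * S).trace) -
        ∑ l ∈ Finset.univ.filter (fun l : Fin N => (l : ℕ) < k), mu l := by
  have hlower := isLowerSet_filter_val_lt N k
  simpa [Finset.compl_filter] using svd_min_loss_lower_bound_general (𝕜 := ℝ) ⟨hU1, hSdecomp⟩
    (isTopSet_of_antitone hlam hlower) ⟨hU2, hSΔSdecomp⟩ ⟨hU3, hgrad⟩
    (isTopSet_of_antitone hmu hlower)
end

section
/- Let Q be a real symmetric N×N matrix and 1 ≤ k ≤ N. Then the sum of the k largest eigenvalues of Q equals the maximum of tr(Uᵀ·Q·U) over all real N×k matrices U with orthonormal columns (i.e., Uᵀ·U = I_k). -/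
open Matrix

/-!
Conjugating by `W` reduces the claim to `Q = diagonal μ`. For `U` with orthonormal columns,
`P = U * Uᴴ` is an orthogonal projection of trace `k`, so its diagonal entries are weights
in `[0, 1]` with total `k`, and the trace of `Uᴴ * diagonal μ * U` is the weighted sum
`∑ i, P i i * μ i`. Such a sum is largest when the weight sits entirely on the `k` largest `μ i`,
which happens when the columns of `U` are the corresponding coordinate vectors.
-/

theorem sum_mul_le_sum_of_sum_eq_card {n R : Type*} [Fintype n] [Ring R] [PartialOrder R]
    [IsOrderedRing R] {w μ : n → R} {s : Finset n} {c : R} (hw₀ : ∀ i, 0 ≤ w i) (hw₁ : ∀ i, w i ≤ 1)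
    (hw : ∑ i, w i = s.card) (hs : ∀ i ∈ s, c ≤ μ i) (hsc : ∀ i ∉ s, μ i ≤ c) :
    ∑ i, w i * μ i ≤ ∑ i ∈ s, μ i := by
  classical
  have inside : ∑ i ∈ s, w i * (μ i - c) ≤ ∑ i ∈ s, (μ i - c) := Finset.sum_le_sum fun i hi ↦
    mul_le_of_le_one_left (sub_nonneg.mpr (hs i hi)) (hw₁ i)
  have outside : ∑ i ∈ sᶜ, w i * (μ i - c) ≤ 0 := Finset.sum_nonpos fun i hi ↦
    mul_nonpos_of_nonneg_of_nonpos (hw₀ i) (sub_nonpos.mpr (hsc i (Finset.mem_compl.mp hi)))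
  calc ∑ i, w i * μ i = ∑ i, w i * (μ i - c) + s.card * c := by
        simp only [mul_sub, Finset.sum_sub_distrib, ← Finset.sum_mul, hw, sub_add_cancel]
    _ = ∑ i ∈ s, w i * (μ i - c) + ∑ i ∈ sᶜ, w i * (μ i - c) + s.card * c := by
        rw [Finset.sum_add_sum_compl]
    _ ≤ ∑ i ∈ s, (μ i - c) + 0 + s.card * c := by gcongr
    _ = ∑ i ∈ s, μ i := by
        rw [Finset.sum_sub_distrib, Finset.sum_const, nsmul_eq_mul, add_zero, sub_add_cancel]

theorem isOrderedRing_of_starOrderedRing {R : Type*} [CommRing R] [PartialOrder R] [StarRing R]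
    [StarOrderedRing R] : IsOrderedRing R := by
  refine .of_mul_nonneg fun {a b} ha hb ↦ ?_
  rw [StarOrderedRing.nonneg_iff] at ha
  induction ha using AddSubmonoid.closure_induction with
  | mem _ h =>
    obtain ⟨x, rfl⟩ := h
    simpa only [mul_right_comm] using star_left_conjugate_nonneg hb x
  | zero => rw [zero_mul]
  | add x y _ _ ihx ihy =>
    rw [add_mul]
    exact add_nonneg ihx ihy

section StarProjection

variable {m n R : Type*} [Fintype n]

theorem isStarProjection_mul_conjTranspose [Fintype m] [DecidableEq m] [Semiring R] [StarRing R]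
    {U : Matrix n m R} (hU : Uᴴ * U = 1) : IsStarProjection (U * Uᴴ) where
  isIdempotentElem := by
    rw [IsIdempotentElem, Matrix.mul_assoc, ← Matrix.mul_assoc Uᴴ, hU, Matrix.one_mul]
  isSelfAdjoint := isHermitian_mul_conjTranspose_self U

variable [Ring R] [PartialOrder R] [StarRing R] [StarOrderedRing R] {P : Matrix n n R}

theorem posSemidef_of_isStarProjection (hP : IsStarProjection P) : P.PosSemidef := by
  have hPP : Pᴴ * P = P := by
    rw [← star_eq_conjTranspose, hP.isSelfAdjoint.star_eq, hP.isIdempotentElem.eq]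
  exact hPP ▸ posSemidef_conjTranspose_mul_self P

theorem diag_le_one_of_isStarProjection (hP : IsStarProjection P) (i : n) : P i i ≤ 1 := by
  classical
  simpa only [Matrix.sub_apply, one_apply_eq, sub_nonneg] using
    (posSemidef_of_isStarProjection hP.one_sub).diag_nonneg (i := i)

end StarProjection

theorem trace_conjTranspose_mul_diagonal_mul {m n R : Type*} [Fintype m] [Fintype n]
    [DecidableEq n] [CommSemiring R] [StarRing R] (μ : n → R) (U : Matrix n m R) :
    (Uᴴ * diagonal μ * U).trace = ∑ i, (U * Uᴴ) i i * μ i := by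
  calc (Uᴴ * diagonal μ * U).trace = (U * Uᴴ * diagonal μ).trace := trace_mul_cycle ..
    _ = ∑ i, (U * Uᴴ) i i * μ i := by simp only [trace, diag_apply, mul_diagonal]

section NumericalRange

variable {m n R : Type*} [Fintype m] [DecidableEq m] [Fintype n]

/-- The (unnormalised) `k`-numerical range of `A`, for `k` the cardinality of `m`: the traces of
the compressions of `A` to `k`-dimensional subspaces, each subspace being presented by a matrix `U`
whose columns, indexed by `m`, are an orthonormal basis of it. -/
def traceNumericalRange (m : Type*) [Fintype m] [DecidableEq m] [Semiring R] [StarRing R]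
    (A : Matrix n n R) : Set R :=
  {x | ∃ U : Matrix n m R, Uᴴ * U = 1 ∧ x = (Uᴴ * A * U).trace}

theorem traceNumericalRange_conj_subset {p : Type*} [Fintype p] [DecidableEq p] [Semiring R]
    [StarRing R] {V : Matrix p n R} (hV : V * Vᴴ = 1) (A : Matrix n n R) :
    traceNumericalRange m (V * A * Vᴴ) ⊆ traceNumericalRange m A := by
  rintro _ ⟨U, hU, rfl⟩
  refine ⟨Vᴴ * U, ?_, ?_⟩
  · calc (Vᴴ * U)ᴴ * (Vᴴ * U) = Uᴴ * (V * Vᴴ) * U := by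
          simp only [conjTranspose_mul, conjTranspose_conjTranspose, Matrix.mul_assoc]
      _ = 1 := by rw [hV, Matrix.mul_one, hU]
  · simp only [conjTranspose_mul, conjTranspose_conjTranspose, Matrix.mul_assoc]

variable [DecidableEq n]

theorem traceNumericalRange_conj [CommSemiring R] [StarRing R] {W : Matrix n n R} (hW : Wᴴ * W = 1)
    (A : Matrix n n R) : traceNumericalRange m (W * A * Wᴴ) = traceNumericalRange m A := by
  refine (traceNumericalRange_conj_subset (mul_eq_one_comm.mp hW) A).antisymm ?_
  have hA : Wᴴ * (W * A * Wᴴ) * Wᴴᴴ = A := by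
    calc Wᴴ * (W * A * Wᴴ) * Wᴴᴴ = (Wᴴ * W) * A * (Wᴴ * W) := by
          simp only [conjTranspose_conjTranspose, Matrix.mul_assoc]
      _ = A := by rw [hW, Matrix.one_mul, Matrix.mul_one]
  nth_rw 1 [← hA]
  exact traceNumericalRange_conj_subset (by rwa [conjTranspose_conjTranspose]) _

theorem sum_mem_traceNumericalRange_diagonal [Semiring R] [StarRing R] (μ : n → R) (e : m ↪ n) :
    ∑ l, μ (e l) ∈ traceNumericalRange m (diagonal μ) := by
  set E : Matrix n m R := (1 : Matrix n n R).submatrix id e with hE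
  have compress (A : Matrix n n R) : Eᴴ * A * E = A.submatrix e e := by
    calc Eᴴ * A * E = (1 * A * 1 : Matrix n n R).submatrix e e := by
          rw [submatrix_mul _ _ e id e Function.bijective_id,
            submatrix_mul _ _ e id id Function.bijective_id, submatrix_id_id, hE,
            conjTranspose_submatrix, conjTranspose_one]
      _ = A.submatrix e e := by rw [Matrix.one_mul, Matrix.mul_one]
  refine ⟨E, ?_, ?_⟩
  · simpa only [Matrix.mul_one, submatrix_one_embedding] using compress 1
  · rw [compress, submatrix_diagonal_embedding, trace_diagonal]
    rfl

variable [CommRing R] [StarRing R] [PartialOrder R] [StarOrderedRing R]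

theorem trace_conjTranspose_mul_diagonal_mul_le_sum {μ : n → R} {s : Finset n} {c : R}
    {U : Matrix n m R} (hU : Uᴴ * U = 1) (hms : Fintype.card m = s.card)
    (hs : ∀ i ∈ s, c ≤ μ i) (hsc : ∀ i ∉ s, μ i ≤ c) :
    (Uᴴ * diagonal μ * U).trace ≤ ∑ i ∈ s, μ i := by
  have : IsOrderedRing R := isOrderedRing_of_starOrderedRing
  have hP : IsStarProjection (U * Uᴴ) := isStarProjection_mul_conjTranspose hU
  have htrace : ∑ i, (U * Uᴴ) i i = s.card := by
    calc (U * Uᴴ).trace = (Uᴴ * U).trace := trace_mul_comm U Uᴴ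
      _ = s.card := by rw [hU, trace_one, hms]
  rw [trace_conjTranspose_mul_diagonal_mul]
  exact sum_mul_le_sum_of_sum_eq_card
    (fun _ ↦ (posSemidef_of_isStarProjection hP).diag_nonneg)
    (diag_le_one_of_isStarProjection hP) htrace hs hsc

theorem ky_fan_variational_top_k_eigenvalue_sum_general {W : Matrix n n R}
    (hW : Wᴴ * W = 1) {μ : n → R} (e : m ↪ n) {c : R} (he : ∀ l, c ≤ μ (e l))
    (hec : ∀ i ∉ Set.range e, μ i ≤ c) :
    IsGreatest (traceNumericalRange m (W * diagonal μ * Wᴴ)) (∑ l, μ (e l)) := by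
  rw [traceNumericalRange_conj hW]
  refine ⟨sum_mem_traceNumericalRange_diagonal μ e, ?_⟩
  rintro _ ⟨U, hU, rfl⟩
  rw [← Finset.sum_map Finset.univ e μ]
  exact trace_conjTranspose_mul_diagonal_mul_le_sum hU (by simp) (by simpa using he)
    (by simpa using hec)

end NumericalRange

theorem filter_val_lt_eq_map_castLEEmb {N k : ℕ} (hkN : k ≤ N) :
    Finset.univ.filter (fun l : Fin N ↦ (l : ℕ) < k) = Finset.univ.map (Fin.castLEEmb hkN) := by
  ext l
  simp [Fin.castLE, Fin.ext_iff, Fin.exists_iff]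

theorem exists_threshold_of_antitone {α : Type*} [Preorder α] [Nonempty α] {N k : ℕ} (hkN : k ≤ N)
    {μ : Fin N → α} (hμ : Antitone μ) :
    ∃ c, (∀ l, c ≤ μ (Fin.castLEEmb hkN l)) ∧
      ∀ i ∉ Set.range (Fin.castLEEmb hkN), μ i ≤ c := by
  obtain rfl | hN := N.eq_zero_or_pos
  · exact ⟨Classical.arbitrary α, fun l ↦ (Fin.castLE hkN l).elim0, fun i ↦ i.elim0⟩
  · refine ⟨μ ⟨k - 1, by lia⟩, fun l ↦ hμ (Fin.mk_le_mk.mpr (by lia)), fun i hi ↦ ?_⟩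
    have hki : k ≤ i := not_lt.mp fun h ↦ hi ⟨⟨i, h⟩, rfl⟩
    exact hμ (Fin.mk_le_mk.mpr (by lia))

/-- Ky Fan variational characterization: for a real symmetric
`N×N` matrix `Q` with eigenvalues `mu` in descending order (given via an
orthogonal spectral decomposition with `mu` antitone) and `1 ≤ k ≤ N`, the sum
of the `k` largest eigenvalues of `Q` is the maximum of `tr(Uᵀ·Q·U)` over all
real `N×k` matrices `U` with orthonormal columns (`Uᵀ·U = 1`). -/
theorem ky_fan_variational_top_k_eigenvalue_sum
    {N k : ℕ} (hk1 : 1 ≤ k) (hkN : k ≤ N)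
    (Q : Matrix (Fin N) (Fin N) ℝ) (hQ : Q.IsSymm)
    (mu : Fin N → ℝ) (W : Matrix (Fin N) (Fin N) ℝ)
    (hW : Wᵀ * W = 1) (hQdecomp : Q = W * Matrix.diagonal mu * Wᵀ)
    (hmu : Antitone mu) :
    IsGreatest
      {x : ℝ | ∃ U : Matrix (Fin N) (Fin k) ℝ, Uᵀ * U = 1 ∧ x = (Uᵀ * Q * U).trace}
      (∑ l ∈ Finset.univ.filter (fun l : Fin N => (l : ℕ) < k), mu l) := by
  obtain ⟨c, top, rest⟩ := exists_threshold_of_antitone hkN hmu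
  rw [filter_val_lt_eq_map_castLEEmb hkN, Finset.sum_map, hQdecomp]
  simpa only [traceNumericalRange, conjTranspose_eq_transpose_of_trivial] using
    ky_fan_variational_top_k_eigenvalue_sum_general hW (Fin.castLEEmb hkN) top rest
end

section
/- Let S be a real symmetric N×N matrix with eigenvalues λ_1, …, λ_N ordered so that |λ_1| ≥ … ≥ |λ_N|, let 1 ≤ k ≤ N, and let M be any real N×N matrix of rank at most k. Then ‖S − M‖_F² ≥ Σ_{l=k+1}^N λ_l², where ‖·‖_F denotes the Frobenius norm. -/
open Matrix

/-! Let `W` be the range of `M`. On the right singular vectors `v j` of `S`, the residual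
`S - M` takes the values `σ j • u j - M (v j)`, whose norm is at least `‖σ j‖` times the
distance of the left singular vector `u j` from `W`. By Bessel's inequality the squared norms
of these values add up to at most the squared Frobenius norm of `S - M`, and the squared norms of
the projections of the `u j` to `W` are numbers in `[0, 1]` with total at most `dim W ≤ k`. The
resulting weighted sum of the `‖σ j‖ ^ 2` is smallest when `W` absorbs the `k` largest of them. -/

section Bathtub

theorem sum_compl_le_sum_mul_one_sub {ι R : Type*} [Fintype ι] [DecidableEq ι]
    [CommRing R] [LinearOrder R] [IsStrictOrderedRing R] {a p : ι → R} {s : Finset ι} {t : R}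
    (ht : 0 ≤ t) (hs : ∀ j ∈ s, t ≤ a j) (hsc : ∀ j ∉ s, a j ≤ t)
    (hp0 : ∀ j, 0 ≤ p j) (hp1 : ∀ j, p j ≤ 1) (hp : ∑ j, p j ≤ (s.card : R)) :
    ∑ j ∈ sᶜ, a j ≤ ∑ j, a j * (1 - p j) := by
  have hin : ∑ j ∈ s, t * (1 - p j) ≤ ∑ j ∈ s, a j * (1 - p j) :=
    Finset.sum_le_sum fun j hj => mul_le_mul_of_nonneg_right (hs j hj) (sub_nonneg.2 (hp1 j))
  have hout : ∑ j ∈ sᶜ, a j * p j ≤ ∑ j ∈ sᶜ, t * p j :=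
    Finset.sum_le_sum fun j hj =>
      mul_le_mul_of_nonneg_right (hsc j (Finset.mem_compl.1 hj)) (hp0 j)
  have hslack : 0 ≤ t * (s.card - ∑ j, p j) := mul_nonneg ht (sub_nonneg.2 hp)
  rw [← Finset.sum_add_sum_compl s p] at hslack
  rw [← Finset.sum_add_sum_compl s fun j => a j * (1 - p j)]
  simp only [mul_sub, mul_one, Finset.sum_sub_distrib, Finset.sum_const, nsmul_eq_mul,
    ← Finset.mul_sum] at hin hout hslack ⊢
  linarith

theorem sum_filter_le_sum_mul_one_sub_of_antitone {R : Type*} [CommRing R] [LinearOrder R]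
    [IsStrictOrderedRing R] {n k : ℕ} {a p : Fin n → R} (ha : Antitone a) (ha0 : ∀ j, 0 ≤ a j)
    (hp0 : ∀ j, 0 ≤ p j) (hp1 : ∀ j, p j ≤ 1) (hp : ∑ j, p j ≤ k) :
    ∑ j with k ≤ j.val, a j ≤ ∑ j, a j * (1 - p j) := by
  obtain hkn | hnk := lt_or_ge k n
  · have hcard : (Finset.univ.filter fun j : Fin n => j.val < k).card = k := by
      rw [Fin.card_filter_val_lt, min_eq_right hkn.le]
    have h := sum_compl_le_sum_mul_one_sub (s := {j : Fin n | j.val < k}) (ha0 ⟨k, hkn⟩)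
      (fun j hj => ha (Fin.le_def.2 (Finset.mem_filter_univ j |>.1 hj).le))
      (fun j hj => ha (Fin.le_def.2 (not_lt.1 fun hlt => hj (Finset.mem_filter_univ j |>.2 hlt))))
      hp0 hp1 (by rwa [hcard])
    simpa only [Finset.compl_filter, not_lt] using h
  · rw [Finset.filter_false_of_mem fun j _ => (j.isLt.trans_le hnk).not_ge, Finset.sum_empty]
    exact Finset.sum_nonneg fun j _ => mul_nonneg (ha0 j) (sub_nonneg.2 (hp1 j))

end Bathtub

section InnerProductSpace

variable {𝕜 E F ι κ : Type*} [RCLike 𝕜] [Fintype ι] [Fintype κ]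
  [NormedAddCommGroup E] [InnerProductSpace 𝕜 E] [NormedAddCommGroup F] [InnerProductSpace 𝕜 F]

theorem sum_norm_sq_apply_le_sum_norm_sq_formalAdjoint {T : E → F} {T' : F → E}
    (hT : ∀ x y, inner 𝕜 (T' y) x = inner 𝕜 y (T x)) {v : ι → E} (hv : Orthonormal 𝕜 v)
    (c : OrthonormalBasis κ 𝕜 F) :
    ∑ j, ‖T (v j)‖ ^ 2 ≤ ∑ i, ‖T' (c i)‖ ^ 2 :=
  calc ∑ j, ‖T (v j)‖ ^ 2
      = ∑ j, ∑ i, ‖inner 𝕜 (v j) (T' (c i))‖ ^ 2 := by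
        simp only [← c.sum_sq_norm_inner_right, ← hT, norm_inner_symm]
    _ = ∑ i, ∑ j, ‖inner 𝕜 (v j) (T' (c i))‖ ^ 2 := Finset.sum_comm
    _ ≤ ∑ i, ‖T' (c i)‖ ^ 2 := Finset.sum_le_sum fun _ _ => hv.sum_inner_products_le _

theorem sum_norm_sq_map_le_of_orthonormal [FiniteDimensional 𝕜 F] (T : E →ₗ[𝕜] F) {v : ι → E}
    (hv : Orthonormal 𝕜 v) (b : OrthonormalBasis κ 𝕜 E) :
    ∑ j, ‖T (v j)‖ ^ 2 ≤ ∑ i, ‖T (b i)‖ ^ 2 := by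
  have : FiniteDimensional 𝕜 E := b.toBasis.finiteDimensional_of_finite
  let c := stdOrthonormalBasis 𝕜 F
  exact (sum_norm_sq_apply_le_sum_norm_sq_formalAdjoint
      (fun x y => T.adjoint_inner_left x y) hv c).trans
    (sum_norm_sq_apply_le_sum_norm_sq_formalAdjoint
      (fun x y => (T.adjoint_inner_right y x).symm) c.orthonormal b)

theorem sum_norm_sq_orthogonalProjectionOnto_le_finrank (W : Submodule 𝕜 E)
    [FiniteDimensional 𝕜 W] {u : ι → E} (hu : Orthonormal 𝕜 u) :
    ∑ j, ‖W.orthogonalProjectionOnto (u j)‖ ^ 2 ≤ Module.finrank 𝕜 W := by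
  let c := stdOrthonormalBasis 𝕜 W
  have h := sum_norm_sq_apply_le_sum_norm_sq_formalAdjoint (T' := W.subtype)
    (fun x y => (W.inner_orthogonalProjectionOnto_eq_of_mem_left y x).symm) hu c
  simpa only [Submodule.subtype_apply, ← Submodule.coe_norm, c.orthonormal.norm_eq_one, one_pow,
    Finset.sum_const, Finset.card_univ, Fintype.card_fin, nsmul_one] using h

theorem norm_sq_sub_norm_sq_orthogonalProjectionOnto_le (W : Submodule 𝕜 E)
    [W.HasOrthogonalProjection] (x : E) {w : E} (hw : w ∈ W) :
    ‖x‖ ^ 2 - ‖W.orthogonalProjectionOnto x‖ ^ 2 ≤ ‖x - w‖ ^ 2 := by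
  have hproj : Wᗮ.orthogonalProjectionOnto (x - w) = Wᗮ.orthogonalProjectionOnto x := by
    rw [map_sub, W.orthogonalProjectionOnto_orthogonal_apply_eq_zero hw, sub_zero]
  rw [Submodule.norm_sq_eq_add_norm_sq_projection x W, add_sub_cancel_left, ← hproj]
  gcongr
  exact Wᗮ.norm_orthogonalProjectionOnto_apply_le _

theorem sum_filter_norm_sq_le_sum_norm_sq_smul_sub {n k : ℕ} {u : Fin n → E}
    (hu : Orthonormal 𝕜 u) {σ : Fin n → 𝕜} (hσ : Antitone fun j => ‖σ j‖) {W : Submodule 𝕜 E}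
    [FiniteDimensional 𝕜 W] (hW : Module.finrank 𝕜 W ≤ k) {w : Fin n → E} (hw : ∀ j, w j ∈ W) :
    ∑ j with k ≤ j.val, ‖σ j‖ ^ 2 ≤ ∑ j, ‖σ j • u j - w j‖ ^ 2 := by
  have hle_one (j : Fin n) : ‖W.orthogonalProjectionOnto (u j)‖ ^ 2 ≤ 1 :=
    pow_le_one₀ (norm_nonneg _) <|
      (W.norm_orthogonalProjectionOnto_apply_le _).trans_eq (hu.norm_eq_one j)
  have hsum : ∑ j, ‖W.orthogonalProjectionOnto (u j)‖ ^ 2 ≤ k :=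
    (sum_norm_sq_orthogonalProjectionOnto_le_finrank W hu).trans (mod_cast hW)
  calc ∑ j with k ≤ j.val, ‖σ j‖ ^ 2
      ≤ ∑ j, ‖σ j‖ ^ 2 * (1 - ‖W.orthogonalProjectionOnto (u j)‖ ^ 2) :=
        sum_filter_le_sum_mul_one_sub_of_antitone
          (fun _ _ hij => pow_le_pow_left₀ (norm_nonneg _) (hσ hij) 2)
          (fun _ => sq_nonneg _) (fun _ => sq_nonneg _) hle_one hsum
    _ = ∑ j, (‖σ j • u j‖ ^ 2 - ‖W.orthogonalProjectionOnto (σ j • u j)‖ ^ 2) := by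
        simp only [map_smul, norm_smul, hu.norm_eq_one, mul_pow, one_pow, mul_sub]
    _ ≤ ∑ j, ‖σ j • u j - w j‖ ^ 2 :=
        Finset.sum_le_sum fun j _ => norm_sq_sub_norm_sq_orthogonalProjectionOnto_le W _ (hw j)

theorem sum_filter_norm_sq_le_sum_norm_sq_sub_apply [FiniteDimensional 𝕜 F] {n k : ℕ}
    {S M : E →ₗ[𝕜] F} {u : Fin n → F} {v : Fin n → E} {σ : Fin n → 𝕜} (hu : Orthonormal 𝕜 u)
    (hv : Orthonormal 𝕜 v) (hS : ∀ j, S (v j) = σ j • u j) (hσ : Antitone fun j => ‖σ j‖)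
    (hM : Module.finrank 𝕜 M.range ≤ k) (b : OrthonormalBasis ι 𝕜 E) :
    ∑ j with k ≤ j.val, ‖σ j‖ ^ 2 ≤ ∑ i, ‖(S - M) (b i)‖ ^ 2 :=
  calc ∑ j with k ≤ j.val, ‖σ j‖ ^ 2
      ≤ ∑ j, ‖σ j • u j - M (v j)‖ ^ 2 :=
        sum_filter_norm_sq_le_sum_norm_sq_smul_sub hu hσ hM fun _ => M.mem_range_self _
    _ = ∑ j, ‖(S - M) (v j)‖ ^ 2 := by simp only [LinearMap.sub_apply, hS]
    _ ≤ ∑ i, ‖(S - M) (b i)‖ ^ 2 := sum_norm_sq_map_le_of_orthonormal (S - M) hv b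

end InnerProductSpace

section Matrix

variable {𝕜 m n r : Type*} [RCLike 𝕜]

theorem orthonormal_toLp_col_iff [Fintype m] [DecidableEq r] {U : Matrix m r 𝕜} :
    Orthonormal 𝕜 (fun j => WithLp.toLp 2 (U.col j)) ↔ Uᴴ * U = 1 := by
  rw [orthonormal_iff_ite, ← Matrix.ext_iff]
  simp [Matrix.mul_apply, Matrix.one_apply, PiLp.inner_apply, mul_comm]

variable [Fintype n]

theorem rank_eq_finrank_range_toEuclideanLin [Finite m] [DecidableEq n] (A : Matrix m n 𝕜) :
    A.rank = Module.finrank 𝕜 (Matrix.toEuclideanLin A).range :=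
  A.rank_eq_finrank_range_toLin (PiLp.basisFun 2 𝕜 m) (PiLp.basisFun 2 𝕜 n)

theorem sum_norm_sq_toEuclideanLin_basisFun [Fintype m] [DecidableEq n] (A : Matrix m n 𝕜) :
    ∑ j, ‖Matrix.toEuclideanLin A (EuclideanSpace.basisFun n 𝕜 j)‖ ^ 2 =
      ∑ i, ∑ j, ‖A i j‖ ^ 2 := by
  rw [Finset.sum_comm]
  simp [EuclideanSpace.norm_sq_eq]

/-- Every singular value decomposition `S = U * diagonal σ * Vᴴ`, full or thin, satisfies
`S * V = U * diagonal σ`; the latter also allows `σ` to be only part of the singular values. -/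
theorem eckart_young_lower_bound_general [Fintype m] {r k : ℕ} {S M : Matrix m n 𝕜}
    {U : Matrix m (Fin r) 𝕜} {V : Matrix n (Fin r) 𝕜} {σ : Fin r → 𝕜} (hU : Uᴴ * U = 1)
    (hV : Vᴴ * V = 1) (hS : S * V = U * Matrix.diagonal σ) (hσ : Antitone fun l => ‖σ l‖)
    (hM : M.rank ≤ k) :
    ∑ l with k ≤ l.val, ‖σ l‖ ^ 2 ≤ ∑ i, ∑ j, ‖(S - M) i j‖ ^ 2 := by
  classical
  have hSV (l : Fin r) : Matrix.toEuclideanLin S (WithLp.toLp 2 (V.col l)) =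
      σ l • WithLp.toLp 2 (U.col l) := by
    ext i
    have hentry : (S * V) i l = U i l * σ l := by rw [hS, Matrix.mul_diagonal]
    simpa [Matrix.mul_apply, Matrix.mulVec, dotProduct, mul_comm] using hentry
  rw [← sum_norm_sq_toEuclideanLin_basisFun, map_sub]
  exact sum_filter_norm_sq_le_sum_norm_sq_sub_apply (orthonormal_toLp_col_iff.2 hU)
    (orthonormal_toLp_col_iff.2 hV) hSV hσ (rank_eq_finrank_range_toEuclideanLin M ▸ hM)
    (EuclideanSpace.basisFun n 𝕜)

end Matrix

/-- Eckart–Young lower bound: for a real symmetric `S` with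
eigenvalues `lam` ordered by descending absolute value, `1 ≤ k ≤ N`, and any
real `N×N` matrix `M` of rank at most `k`, the squared Frobenius norm
`‖S − M‖_F²` is at least `Σ_{l=k+1}^N lam l ^ 2`. -/
theorem eckart_young_lower_bound
    {N k : ℕ} (hk1 : 1 ≤ k) (hkN : k ≤ N)
    (S : Matrix (Fin N) (Fin N) ℝ) (hS : S.IsSymm)
    (lam : Fin N → ℝ) (U : Matrix (Fin N) (Fin N) ℝ)
    (hU : Uᵀ * U = 1) (hSdecomp : S = U * Matrix.diagonal lam * Uᵀ)
    (hlam : Antitone fun l => |lam l|)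
    (M : Matrix (Fin N) (Fin N) ℝ) (hM : M.rank ≤ k) :
    ∑ l ∈ Finset.univ.filter (fun l : Fin N => k ≤ (l : ℕ)), lam l ^ 2 ≤
      ∑ i : Fin N, ∑ j : Fin N, (S - M) i j ^ 2 := by
  simpa using eckart_young_lower_bound_general (V := U) hU hU
    (by rw [hSdecomp, Matrix.mul_assoc, hU, Matrix.mul_one]) hlam hM
end
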